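/- arXiv:1508.04386 — 4 statements merged into one kernel-verified Lean document; each statement's English description precedes it below -/
import Mathlib

section
/- Fix Q, M > 0 and N ≥ 0. Let g : [0,∞) → [0,∞) be a function, and let f : [0,∞) → ℝ be smooth, such that: (a) τ^k |f^{(k)}(τ)| ≤ M τ^N g(τ) for all τ ≥ 0 and every integer k with 0 ≤ k ≤ ⌈Q+N⌉+2; and either (b₁) g is increasing with g(2τ) ≤ 2^Q g(τ) for all τ ≥ 0, or (b₂) g is decreasing with g(2τ) ≥ 2^{−1+Q} g(τ) for all τ ≥ 0. Then there is a constant C > 0, depending only on Q, M and N, such that for every λ = x + iy ∈ ℂ with x > 0, | ∫_0^∞ e^{−λτ} f(τ) dτ | ≤ C |λ|^{−1−N} g(1/|λ|). -/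
open MeasureTheory Complex
open Set Filter Topology

theorem norm_laplaceKernel_mul (lam : ℂ) (h : ℝ → ℝ) (τ : ℝ) :
    ‖Complex.exp (-lam * (τ : ℂ)) * (h τ : ℂ)‖ = Real.exp (-lam.re * τ) * |h τ| := by
  simp [Complex.norm_exp]

/-- The Laplace integrand of a continuous function of polynomial growth is integrable at
infinity. -/
theorem integrableOn_laplace_of_le_rpow {lam : ℂ} (hlam : 0 < lam.re) {h : ℝ → ℝ}
    (hc : Continuous h) {r s D : ℝ} (hr : 0 < r) (hs : 0 ≤ s)
    (hD : ∀ τ, r ≤ τ → |h τ| ≤ D * τ ^ s) :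
    IntegrableOn (fun τ : ℝ => Complex.exp (-lam * (τ : ℂ)) * (h τ : ℂ)) (Ioi r) := by
  have hint : IntegrableOn (fun x : ℝ => D * (x ^ s * Real.exp (-lam.re * x))) (Ioi r) := by
    have h1 := integrableOn_rpow_mul_exp_neg_mul_rpow (p := 1) (s := s) (b := lam.re)
      (by linarith) one_pos hlam
    simp only [Real.rpow_one] at h1
    exact (h1.mono_set (Ioi_subset_Ioi hr.le)).const_mul D
  refine Integrable.mono' hint (by fun_prop) ?_
  filter_upwards [ae_restrict_mem measurableSet_Ioi] with τ hτ
  rw [norm_laplaceKernel_mul]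
  have := mul_le_mul_of_nonneg_left (hD τ (le_of_lt hτ)) (Real.exp_pos (-lam.re * τ)).le
  linarith

theorem tendsto_laplaceKernel_mul_of_le_rpow {lam : ℂ} (hlam : 0 < lam.re) {h : ℝ → ℝ}
    {r s D : ℝ} (hD : ∀ τ, r ≤ τ → |h τ| ≤ D * τ ^ s) :
    Tendsto (fun τ : ℝ => Complex.exp (-lam * (τ : ℂ)) * (h τ : ℂ)) atTop (𝓝 0) := by
  have h1 := (tendsto_rpow_mul_exp_neg_mul_atTop_nhds_zero s lam.re hlam).const_mul D
  rw [mul_zero] at h1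
  refine squeeze_zero_norm' ?_ h1
  filter_upwards [eventually_ge_atTop r] with τ hτ
  rw [norm_laplaceKernel_mul]
  have := mul_le_mul_of_nonneg_left (hD τ hτ) (Real.exp_pos (-lam.re * τ)).le
  linarith

/-- Integration by parts for the Laplace integral over a half-line. -/
theorem laplace_Ioi_eq_of_hasDerivAt {lam : ℂ} (hlam : 0 < lam.re) {h h' : ℝ → ℝ}
    (hderiv : ∀ τ, HasDerivAt h (h' τ) τ) (hc' : Continuous h') {r s D D' : ℝ}
    (hr : 0 < r) (hs : 0 ≤ s) (hD : ∀ τ, r ≤ τ → |h τ| ≤ D * τ ^ s)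
    (hD' : ∀ τ, r ≤ τ → |h' τ| ≤ D' * τ ^ s) :
    lam * ∫ τ in Ioi r, Complex.exp (-lam * (τ : ℂ)) * (h τ : ℂ) =
      Complex.exp (-lam * (r : ℂ)) * (h r : ℂ) +
        ∫ τ in Ioi r, Complex.exp (-lam * (τ : ℂ)) * (h' τ : ℂ) := by
  have hc : Continuous h := continuous_iff_continuousAt.2 fun τ => (hderiv τ).continuousAt
  have hi := integrableOn_laplace_of_le_rpow hlam hc hr hs hD
  have hi' := integrableOn_laplace_of_le_rpow hlam hc' hr hs hD'
  have key := integral_Ioi_of_hasDerivAt_of_tendsto (a := r)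
    (f := fun τ : ℝ => Complex.exp (-lam * (τ : ℂ)) * (h τ : ℂ))
    (f' := fun τ : ℝ => Complex.exp (-lam * (τ : ℂ)) * (h' τ : ℂ) -
      lam * (Complex.exp (-lam * (τ : ℂ)) * (h τ : ℂ)))
    (by fun_prop) ?_ (hi'.sub (hi.const_mul lam))
    (tendsto_laplaceKernel_mul_of_le_rpow hlam hD)
  · rw [integral_sub hi' (hi.const_mul lam), integral_const_mul] at key
    linear_combination -key
  · intro τ _
    have h1 : HasDerivAt (fun t : ℝ => Complex.exp (-lam * (t : ℂ)))
        (Complex.exp (-lam * (τ : ℂ)) * (-lam * 1)) τ :=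
      ((HasDerivAt.ofReal_comp (hasDerivAt_id τ)).const_mul (-lam)).cexp
    refine (h1.mul (hderiv τ).ofReal_comp).congr_deriv ?_
    ring

theorem norm_laplace_Ioi_le_add {lam : ℂ} (hlam : 0 < lam.re) {f : ℝ → ℝ}
    (hf : ContDiff ℝ (⊤ : ℕ∞) f) {K : ℕ} {s B : ℝ} (hs : 0 ≤ s)
    (hB : ∀ k ≤ K, ∀ τ, 1 / ‖lam‖ ≤ τ → τ ^ k * |iteratedDeriv k f τ| ≤ B * τ ^ s) :
    ∀ k ≤ K, ‖∫ τ in Ioi (1 / ‖lam‖), Complex.exp (-lam * (τ : ℂ)) * (f τ : ℂ)‖ ≤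
      k * (B * (1 / ‖lam‖) ^ (s + 1)) + (1 / ‖lam‖) ^ k *
        ‖∫ τ in Ioi (1 / ‖lam‖),
          Complex.exp (-lam * (τ : ℂ)) * ((iteratedDeriv k f τ : ℝ) : ℂ)‖ := by
  have hl : 0 < ‖lam‖ := norm_pos_iff.2 fun h => by simp [h] at hlam
  have hr : 0 < 1 / ‖lam‖ := by positivity
  set r := 1 / ‖lam‖ with hrdef
  have hgrow : ∀ k ≤ K, ∀ τ, r ≤ τ → |iteratedDeriv k f τ| ≤ (B / r ^ k) * τ ^ s := by
    intro k hk τ hτ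
    have h1 : r ^ k * |iteratedDeriv k f τ| ≤ B * τ ^ s :=
      (mul_le_mul_of_nonneg_right (pow_le_pow_left₀ hr.le hτ k) (abs_nonneg _)).trans
        (hB k hk τ hτ)
    rw [div_mul_eq_mul_div, le_div_iff₀ (by positivity)]
    linarith
  intro k
  induction k with
  | zero => intro _; simp
  | succ k ih =>
    intro hk
    refine (ih (by omega)).trans ?_
    have hparts := laplace_Ioi_eq_of_hasDerivAt hlam (h := iteratedDeriv k f)
      (h' := iteratedDeriv (k + 1) f) (fun τ => by
        rw [iteratedDeriv_succ]
        exact (hf.differentiable_iteratedDeriv k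
          (by exact_mod_cast WithTop.coe_lt_top k) τ).hasDerivAt)
      (hf.continuous_iteratedDeriv (k + 1) (by exact_mod_cast le_top)) hr hs
      (hgrow k (by omega)) (hgrow (k + 1) hk)
    set I := ∫ τ in Ioi r, Complex.exp (-lam * (τ : ℂ)) * ((iteratedDeriv k f τ : ℝ) : ℂ)
    set J := ∫ τ in Ioi r, Complex.exp (-lam * (τ : ℂ)) * ((iteratedDeriv (k + 1) f τ : ℝ) : ℂ)
    have h1 : ‖lam‖ * ‖I‖ ≤ |iteratedDeriv k f r| + ‖J‖ := by
      rw [← norm_mul, hparts]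
      refine (norm_add_le _ _).trans (add_le_add_left ?_ _)
      rw [norm_laplaceKernel_mul]
      exact mul_le_of_le_one_left (abs_nonneg _)
        (Real.exp_le_one_iff.2 (by nlinarith))
    have h2 : ‖I‖ ≤ r * (|iteratedDeriv k f r| + ‖J‖) := by
      have hrl : r * ‖lam‖ = 1 := by rw [hrdef, one_div_mul_cancel hl.ne']
      calc ‖I‖ = r * (‖lam‖ * ‖I‖) := by rw [← mul_assoc, hrl, one_mul]
        _ ≤ _ := by gcongr
    have h3 := hB k (by omega) r le_rfl
    have h4 : r ^ k * ‖I‖ ≤ r * (B * r ^ s) + r ^ (k + 1) * ‖J‖ := by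
      calc r ^ k * ‖I‖ ≤ r ^ k * (r * (|iteratedDeriv k f r| + ‖J‖)) := by gcongr
        _ = r * (r ^ k * |iteratedDeriv k f r|) + r ^ (k + 1) * ‖J‖ := by ring
        _ ≤ _ := by gcongr
    rw [Real.rpow_add_one hr.ne']
    push_cast
    linarith

theorem norm_laplace_Ioi_le {lam : ℂ} (hlam : 0 < lam.re) {f : ℝ → ℝ}
    (hf : ContDiff ℝ (⊤ : ℕ∞) f) {K : ℕ} {s B : ℝ} (hs : 0 ≤ s) (hsK : s + 2 ≤ K) (hB0 : 0 ≤ B)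
    (hB : ∀ k ≤ K, ∀ τ, 1 / ‖lam‖ ≤ τ → τ ^ k * |iteratedDeriv k f τ| ≤ B * τ ^ s) :
    ‖∫ τ in Ioi (1 / ‖lam‖), Complex.exp (-lam * (τ : ℂ)) * (f τ : ℂ)‖ ≤
      (K + 1) * (B * (1 / ‖lam‖) ^ (s + 1)) := by
  have hl : 0 < ‖lam‖ := norm_pos_iff.2 fun h => by simp [h] at hlam
  have hr : 0 < 1 / ‖lam‖ := by positivity
  refine (norm_laplace_Ioi_le_add hlam hf hs hB K le_rfl).trans ?_
  set r := 1 / ‖lam‖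
  have hexp : s - K < -1 := by linarith
  have h1 : ‖∫ τ in Ioi r, Complex.exp (-lam * (τ : ℂ)) * ((iteratedDeriv K f τ : ℝ) : ℂ)‖ ≤
      ∫ τ in Ioi r, B * τ ^ (s - K) := by
    refine norm_integral_le_of_norm_le
      ((integrableOn_Ioi_rpow_of_lt hexp hr).const_mul B) ?_
    filter_upwards [ae_restrict_mem measurableSet_Ioi] with τ hτ
    have hτ0 : 0 < τ := hr.trans hτ
    rw [norm_laplaceKernel_mul, Real.rpow_sub_natCast hτ0.ne', ← mul_div_assoc,
      le_div_iff₀ (by positivity)]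
    have h2 : Real.exp (-lam.re * τ) ≤ 1 := Real.exp_le_one_iff.2 (by nlinarith)
    have h3 := hB K le_rfl τ (le_of_lt hτ)
    calc Real.exp (-lam.re * τ) * |iteratedDeriv K f τ| * τ ^ K
        ≤ 1 * |iteratedDeriv K f τ| * τ ^ K := by gcongr
      _ ≤ _ := by linarith
  rw [integral_const_mul, integral_Ioi_rpow_of_lt hexp hr] at h1
  have h2 : -r ^ (s - K + 1) / (s - K + 1) ≤ r ^ (s - K + 1) := by
    have h3 : 0 < r ^ (s - K + 1) := Real.rpow_pos_of_pos hr _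
    rw [div_le_iff_of_neg (by linarith)]
    nlinarith
  have h4 : r ^ K * r ^ (s - K + 1) = r ^ (s + 1) := by
    rw [← Real.rpow_natCast, ← Real.rpow_add hr]
    congr 1; ring
  have h5 := mul_le_mul_of_nonneg_left (h1.trans (mul_le_mul_of_nonneg_left h2 hB0))
    (pow_pos hr K).le
  have h6 : r ^ K * (B * r ^ (s - K + 1)) = B * r ^ (s + 1) := by rw [← h4]; ring
  linarith

theorem norm_laplace_Ioc_le {lam : ℂ} (hlam : 0 < lam.re) {f : ℝ → ℝ} {r q B : ℝ}
    (hr : 0 < r) (hq : 0 < q) (hB : ∀ τ, 0 < τ → τ ≤ r → |f τ| ≤ B * τ ^ (q - 1)) :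
    ‖∫ τ in Ioc 0 r, Complex.exp (-lam * (τ : ℂ)) * (f τ : ℂ)‖ ≤ B * (r ^ q / q) := by
  have hint : IntegrableOn (fun τ : ℝ => τ ^ (q - 1)) (Ioc 0 r) :=
    (intervalIntegrable_iff_integrableOn_Ioc_of_le hr.le).1
      (intervalIntegral.intervalIntegrable_rpow' (by linarith))
  have h1 : ∫ τ in Ioc 0 r, B * τ ^ (q - 1) = B * (r ^ q / q) := by
    rw [integral_const_mul, ← intervalIntegral.integral_of_le hr.le,
      integral_rpow (Or.inl (by linarith)), sub_add_cancel, Real.zero_rpow hq.ne', sub_zero]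
  rw [← h1]
  refine norm_integral_le_of_norm_le (hint.const_mul B) ?_
  filter_upwards [ae_restrict_mem measurableSet_Ioc] with τ hτ
  rw [norm_laplaceKernel_mul]
  exact (mul_le_of_le_one_left (abs_nonneg _)
    (Real.exp_le_one_iff.2 (by nlinarith [hτ.1]))).trans (hB τ hτ.1 hτ.2)

theorem exists_two_pow_between {a b : ℝ} (ha : 0 < a) (hab : a ≤ b) :
    ∃ n : ℕ, b ≤ 2 ^ n * a ∧ (2 : ℝ) ^ n ≤ 2 * (b / a) := by
  obtain ⟨n, h1, h2⟩ := exists_nat_pow_near ((one_le_div ha).2 hab) (one_lt_two (α := ℝ))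
  refine ⟨n + 1, ((div_lt_iff₀ ha).1 h2).le, ?_⟩
  rw [pow_succ]; linarith

theorem le_rpow_mul_of_monotone_doubling {g : ℝ → ℝ} {Q : ℝ} (hQ : 0 ≤ Q)
    (hg : ∀ τ, 0 ≤ τ → 0 ≤ g τ) (hmono : ∀ s t : ℝ, 0 ≤ s → s ≤ t → g s ≤ g t)
    (hdbl : ∀ τ, 0 ≤ τ → g (2 * τ) ≤ 2 ^ Q * g τ) {a b : ℝ} (ha : 0 < a) (hab : a ≤ b) :
    g b ≤ (2 * (b / a)) ^ Q * g a := by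
  obtain ⟨n, h1, h2⟩ := exists_two_pow_between ha hab
  have hit : ∀ m : ℕ, g (2 ^ m * a) ≤ ((2 : ℝ) ^ m) ^ Q * g a := by
    intro m
    induction m with
    | zero => simp
    | succ m ih =>
      have h3 := hdbl (2 ^ m * a) (by positivity)
      rw [pow_succ', Real.mul_rpow (by norm_num) (by positivity), mul_assoc, mul_assoc]
      exact h3.trans (by gcongr)
  refine (hmono b _ (ha.le.trans hab) h1).trans ((hit n).trans ?_)
  exact mul_le_mul_of_nonneg_right (Real.rpow_le_rpow (by positivity) h2 hQ) (hg a ha.le)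

theorem le_rpow_mul_of_antitone_doubling {g : ℝ → ℝ} {p : ℝ} (hp : 0 ≤ p)
    (hg : ∀ τ, 0 ≤ τ → 0 ≤ g τ) (hanti : ∀ s t : ℝ, 0 ≤ s → s ≤ t → g t ≤ g s)
    (hdbl : ∀ τ, 0 ≤ τ → g τ ≤ 2 ^ p * g (2 * τ)) {a b : ℝ} (ha : 0 < a) (hab : a ≤ b) :
    g a ≤ (2 * (b / a)) ^ p * g b := by
  obtain ⟨n, h1, h2⟩ := exists_two_pow_between ha hab
  have hit : ∀ m : ℕ, g a ≤ ((2 : ℝ) ^ m) ^ p * g (2 ^ m * a) := by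
    intro m
    induction m with
    | zero => simp
    | succ m ih =>
      have h3 := hdbl (2 ^ m * a) (by positivity)
      rw [pow_succ', Real.mul_rpow (by norm_num) (by positivity), mul_comm ((2 : ℝ) ^ p),
        mul_assoc, mul_assoc]
      exact ih.trans (by gcongr)
  have hb : 0 ≤ g b := hg b (ha.le.trans hab)
  calc g a ≤ ((2 : ℝ) ^ n) ^ p * g (2 ^ n * a) := hit n
    _ ≤ ((2 : ℝ) ^ n) ^ p * g b := by
      gcongr
      exact hanti _ _ (ha.le.trans hab) h1
    _ ≤ _ := by gcongr

/-- Proposition 7.3: fix `Q, M > 0`, `N ≥ 0`. Let `g : [0,∞) → [0,∞)` and let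
`f : [0,∞) → ℝ` be smooth with `τ^k |f^{(k)}(τ)| ≤ M τ^N g(τ)` for `0 ≤ k ≤ ⌈Q+N⌉+2`,
and suppose `g` is either increasing with `g(2τ) ≤ 2^Q g(τ)` or decreasing with
`g(2τ) ≥ 2^{−1+Q} g(τ)`. Then there is `C = C(Q,M,N) > 0` such that for every
`λ = x + iy` with `x > 0`, `|∫_0^∞ e^{−λτ} f(τ) dτ| ≤ C |λ|^{−1−N} g(1/|λ|)`. -/
theorem statement15 (Q M N : ℝ) (hQ : 0 < Q) (hM : 0 < M) (hN : 0 ≤ N) :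
    ∃ C : ℝ, 0 < C ∧ ∀ (f g : ℝ → ℝ),
      ContDiff ℝ (⊤ : ℕ∞) f →
      (∀ τ : ℝ, 0 ≤ τ → 0 ≤ g τ) →
      (∀ k : ℕ, k ≤ ⌈Q + N⌉₊ + 2 → ∀ τ : ℝ, 0 ≤ τ →
        τ ^ k * |iteratedDeriv k f τ| ≤ M * τ ^ N * g τ) →
      (((∀ s t : ℝ, 0 ≤ s → s ≤ t → g s ≤ g t) ∧
          ∀ τ : ℝ, 0 ≤ τ → g (2 * τ) ≤ 2 ^ Q * g τ) ∨
        ((∀ s t : ℝ, 0 ≤ s → s ≤ t → g t ≤ g s) ∧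
          ∀ τ : ℝ, 0 ≤ τ → 2 ^ (-1 + Q : ℝ) * g τ ≤ g (2 * τ))) →
      ∀ lam : ℂ, 0 < lam.re →
        ‖∫ τ in Set.Ioi (0 : ℝ), Complex.exp (-lam * (τ : ℂ)) * (f τ : ℂ)‖ ≤
          C * ‖lam‖ ^ (-1 - N : ℝ) * g (1 / ‖lam‖) := by
  have hq : 0 < min Q 1 := lt_min hQ one_pos
  set q := min Q 1
  have hq1 : q ≤ 1 := min_le_right _ _
  have hqQ : q ≤ Q := min_le_left _ _
  set K := ⌈Q + N⌉₊ + 2 with hK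
  refine ⟨2 * M / q + (K + 1) * (2 ^ Q * M), by positivity, ?_⟩
  intro f g hf hg hfg hcases lam hlam
  have hl : 0 < ‖lam‖ := norm_pos_iff.2 fun h => by simp [h] at hlam
  have hr : 0 < 1 / ‖lam‖ := by positivity
  have hpow : ‖lam‖ ^ (-1 - N : ℝ) = (1 / ‖lam‖) ^ (N + 1) := by
    rw [one_div, Real.inv_rpow hl.le, ← Real.rpow_neg hl.le]
    congr 1; ring
  rw [hpow]
  have hfar : ∀ τ, 1 / ‖lam‖ ≤ τ → g τ ≤ (2 * (τ / (1 / ‖lam‖))) ^ Q * g (1 / ‖lam‖) := by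
    intro τ hτ
    rcases hcases with ⟨hmono, hdbl⟩ | ⟨hanti, -⟩
    · exact le_rpow_mul_of_monotone_doubling hQ.le hg hmono hdbl hr hτ
    · have h1 : 1 ≤ τ / (1 / ‖lam‖) := (one_le_div hr).2 hτ
      exact (hanti _ _ hr.le hτ).trans (le_mul_of_one_le_left (hg _ hr.le)
        (Real.one_le_rpow (by linarith) hQ.le))
  have hnear : ∀ τ, 0 < τ → τ ≤ 1 / ‖lam‖ →
      g τ ≤ (2 * (1 / ‖lam‖ / τ)) ^ (1 - q) * g (1 / ‖lam‖) := by
    intro τ hτ0 hτ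
    rcases hcases with ⟨hmono, -⟩ | ⟨hanti, hdbl⟩
    · have h1 : 1 ≤ 1 / ‖lam‖ / τ := (one_le_div hτ0).2 hτ
      exact (hmono _ _ hτ0.le hτ).trans (le_mul_of_one_le_left (hg _ hr.le)
        (Real.one_le_rpow (by linarith) (by linarith)))
    · refine le_rpow_mul_of_antitone_doubling (by linarith) hg hanti (fun t ht => ?_) hτ0 hτ
      have h1 : (2 : ℝ) ^ (1 - q) * 2 ^ (-1 + Q) = 2 ^ (Q - q) := by
        rw [← Real.rpow_add two_pos]; congr 1; ring
      have h2 : (1 : ℝ) ≤ 2 ^ (Q - q) := Real.one_le_rpow one_le_two (by linarith)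
      calc g t ≤ 2 ^ (Q - q) * g t := le_mul_of_one_le_left (hg t ht) h2
        _ = 2 ^ (1 - q) * (2 ^ (-1 + Q) * g t) := by rw [← h1, mul_assoc]
        _ ≤ _ := by gcongr; exact hdbl t ht
  have hA : 0 ≤ g (1 / ‖lam‖) := hg _ hr.le
  set A := g (1 / ‖lam‖)
  have hKge : N + Q + 2 ≤ K := by
    have := Nat.le_ceil (Q + N)
    rw [hK]; push_cast; linarith
  have hB : ∀ k ≤ K, ∀ τ, 1 / ‖lam‖ ≤ τ → τ ^ k * |iteratedDeriv k f τ| ≤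
      2 ^ Q * M * A / (1 / ‖lam‖) ^ Q * τ ^ (N + Q) := by
    intro k hk τ hτ
    have hτ0 : 0 < τ := hr.trans_le hτ
    calc τ ^ k * |iteratedDeriv k f τ| ≤ M * τ ^ N * g τ := hfg k hk τ hτ0.le
      _ ≤ M * τ ^ N * ((2 * (τ / (1 / ‖lam‖))) ^ Q * A) := by gcongr; exact hfar τ hτ
      _ = _ := by
        rw [Real.mul_rpow two_pos.le (by positivity), Real.div_rpow hτ0.le hr.le,
          Real.rpow_add hτ0]
        ring
  have htail := norm_laplace_Ioi_le hlam hf (by positivity) hKge (by positivity) hB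
  have htailint : IntegrableOn (fun τ : ℝ => Complex.exp (-lam * (τ : ℂ)) * (f τ : ℂ))
      (Ioi (1 / ‖lam‖)) :=
    integrableOn_laplace_of_le_rpow hlam hf.continuous hr (s := N + Q) (by positivity)
      fun τ hτ => by simpa using hB 0 (Nat.zero_le _) τ hτ
  have hhead := norm_laplace_Ioc_le (f := f) hlam hr hq
    (B := 2 * M * A * (1 / ‖lam‖) ^ N * (1 / ‖lam‖) ^ (1 - q)) (by
      intro τ hτ0 hτ
      have h1 : |f τ| ≤ M * τ ^ N * g τ := by simpa using hfg 0 (Nat.zero_le _) τ hτ0.le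
      have h2 : (2 : ℝ) ^ (1 - q) ≤ 2 := by
        simpa using Real.rpow_le_rpow_of_exponent_le one_le_two (by linarith : 1 - q ≤ 1)
      calc |f τ| ≤ M * τ ^ N * g τ := h1
        _ ≤ M * (1 / ‖lam‖) ^ N * ((2 * (1 / ‖lam‖ / τ)) ^ (1 - q) * A) := by
          have := hg τ hτ0.le
          gcongr
          exact hnear τ hτ0 hτ
        _ = 2 ^ (1 - q) * (M * A * (1 / ‖lam‖) ^ N * (1 / ‖lam‖) ^ (1 - q) *
              τ ^ (q - 1)) := by
          rw [Real.mul_rpow two_pos.le (by positivity), Real.div_rpow hr.le hτ0.le,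
            show q - 1 = -(1 - q) by ring, Real.rpow_neg hτ0.le]
          ring
        _ ≤ 2 * (M * A * (1 / ‖lam‖) ^ N * (1 / ‖lam‖) ^ (1 - q) * τ ^ (q - 1)) := by
          gcongr
        _ = _ := by ring)
  have hheadint : IntegrableOn (fun τ : ℝ => Complex.exp (-lam * (τ : ℂ)) * (f τ : ℂ))
      (Ioc 0 (1 / ‖lam‖)) := by
    have := hf.continuous
    exact (Continuous.integrableOn_Icc (by fun_prop)).mono_set Ioc_subset_Icc_self
  rw [← Ioc_union_Ioi_eq_Ioi hr.le, setIntegral_union Ioc_disjoint_Ioi_same measurableSet_Ioi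
    hheadint htailint]
  refine (norm_add_le _ _).trans ((add_le_add hhead htail).trans (le_of_eq ?_))
  have h1 : (1 / ‖lam‖) ^ (1 - q) * (1 / ‖lam‖) ^ q = 1 / ‖lam‖ := by
    rw [← Real.rpow_add hr, sub_add_cancel, Real.rpow_one]
  have h2 : (1 / ‖lam‖) ^ (N + Q + 1) = (1 / ‖lam‖) ^ Q * (1 / ‖lam‖) ^ (N + 1) := by
    rw [← Real.rpow_add hr]; congr 1; ring
  have h3 : (1 / ‖lam‖) ^ Q ≠ 0 := (Real.rpow_pos_of_pos hr Q).ne'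
  have h4 : 2 ^ Q * M * A / (1 / ‖lam‖) ^ Q * ((1 / ‖lam‖) ^ Q * (1 / ‖lam‖) ^ (N + 1)) =
      2 ^ Q * M * A * (1 / ‖lam‖) ^ (N + 1) := by
    rw [← mul_assoc, div_mul_cancel₀ _ h3]
  rw [h2, h4, Real.rpow_add_one hr.ne']
  linear_combination (2 * M * A * (1 / ‖lam‖) ^ N / q) * h1
end

section
/- There exist absolute constants 0 < c ≤ C < ∞ with the following property. Let φ : ℝ → ℝ be a convex function attaining its minimum value at some θ₀ ∈ ℝ, and suppose the set L = {θ ∈ ℝ : φ(θ) ≤ φ(θ₀) + 1} has finite Lebesgue measure |L|. Then c |L| e^{−φ(θ₀)} ≤ ∫_ℝ e^{−φ(θ)} dθ ≤ C |L| e^{−φ(θ₀)}. -/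
open MeasureTheory

/-- The mass of the (unnormalised) Laplace density with centre `a` and scale `r`. -/
lemma integral_exp_neg_abs_sub_div (a : ℝ) {r : ℝ} (hr : 0 < r) :
    ∫ x : ℝ, Real.exp (-(|x - a| / r)) = 2 * r := by
  have h_scale : ∀ x : ℝ, Real.exp (-(|x| / r)) = Real.exp (-|x / r|) := fun x ↦ by
    rw [abs_div, abs_of_pos hr]
  rw [integral_sub_right_eq_self (fun x : ℝ ↦ Real.exp (-(|x| / r))) a]
  simp_rw [h_scale]
  rw [Measure.integral_comp_div (fun x : ℝ ↦ Real.exp (-|x|)) r,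
    integral_comp_abs (f := fun x ↦ Real.exp (-x)), integral_exp_neg_Ioi_zero, abs_of_pos hr,
    smul_eq_mul]
  ring

lemma integrable_exp_neg_abs_sub_div (a : ℝ) {r : ℝ} (hr : 0 < r) :
    Integrable fun x : ℝ ↦ Real.exp (-(|x - a| / r)) := by
  apply Integrable.of_integral_ne_zero
  rw [integral_exp_neg_abs_sub_div a hr]
  positivity

/-- A convex function grows at least linearly away from its minimum, with slope controlled by the
length of its unit sublevel set. -/
lemma ConvexOn.abs_sub_div_le_volume_sublevel {φ : ℝ → ℝ} (hφ : ConvexOn ℝ Set.univ φ) {a : ℝ}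
    (hmin : ∀ x, φ a ≤ φ x) (hfin : volume {x | φ x ≤ φ a + 1} ≠ ⊤) (x : ℝ) :
    |x - a| / (1 + (φ x - φ a)) ≤ (volume {x | φ x ≤ φ a + 1}).toReal := by
  have hD : 0 ≤ φ x - φ a := sub_nonneg.2 (hmin x)
  set s : ℝ := 1 / (1 + (φ x - φ a)) with hs
  have hs0 : 0 ≤ s := by positivity
  have hs1 : s ≤ 1 := by
    rw [hs, div_le_one (by positivity)]
    linarith
  have hsD : s * (φ x - φ a) ≤ 1 := by
    rw [hs, one_div_mul_eq_div, div_le_one (by positivity)]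
    linarith
  have h_end : φ ((1 - s) * a + s * x) ≤ φ a + 1 := by
    have h := hφ.2 (Set.mem_univ a) (Set.mem_univ x) (sub_nonneg.2 hs1) hs0 (by ring)
    simp only [smul_eq_mul] at h
    linarith
  have h_convex : Convex ℝ {y | φ y ≤ φ a + 1} := by
    simpa using hφ.convex_le (φ a + 1)
  have h_sub : Set.uIcc a ((1 - s) * a + s * x) ⊆ {y | φ y ≤ φ a + 1} := by
    rw [← segment_eq_uIcc]
    exact h_convex.segment_subset (by simp) h_end
  have h_vol := ENNReal.toReal_mono hfin (measure_mono (μ := volume) h_sub)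
  rw [Real.volume_interval, ENNReal.toReal_ofReal (abs_nonneg _),
    show (1 - s) * a + s * x - a = s * (x - a) by ring, abs_mul, abs_of_nonneg hs0] at h_vol
  rwa [hs, one_div_mul_eq_div] at h_vol

/-- Proposition 9.1: there are absolute constants `0 < c ≤ C` such that for every convex
`φ : ℝ → ℝ` attaining its minimum at `θ₀`, with `L = {θ : φ(θ) ≤ φ(θ₀) + 1}` of finite
Lebesgue measure, one has `c |L| e^{−φ(θ₀)} ≤ ∫_ℝ e^{−φ(θ)} dθ ≤ C |L| e^{−φ(θ₀)}`. -/
theorem statement16 :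
    ∃ c C : ℝ, 0 < c ∧ c ≤ C ∧
      ∀ φ : ℝ → ℝ, ConvexOn ℝ Set.univ φ →
        ∀ θ₀ : ℝ, (∀ θ : ℝ, φ θ₀ ≤ φ θ) →
          volume {θ : ℝ | φ θ ≤ φ θ₀ + 1} ≠ ⊤ →
          c * ((volume {θ : ℝ | φ θ ≤ φ θ₀ + 1}).toReal * Real.exp (-φ θ₀)) ≤
              (∫ θ : ℝ, Real.exp (-φ θ)) ∧
            (∫ θ : ℝ, Real.exp (-φ θ)) ≤
              C * ((volume {θ : ℝ | φ θ ≤ φ θ₀ + 1}).toReal * Real.exp (-φ θ₀)) := by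
  refine ⟨Real.exp (-1), 2 * Real.exp 1, Real.exp_pos _, ?_, fun φ hφ a hmin hfin ↦ ?_⟩
  · have : Real.exp (-1) ≤ Real.exp 1 := Real.exp_le_exp.2 (by norm_num)
    linarith [Real.exp_pos 1]
  have h_growth := hφ.abs_sub_div_le_volume_sublevel hmin hfin
  have h_cont : Continuous φ := continuousOn_univ.1 (hφ.continuousOn isOpen_univ)
  have h_meas : MeasurableSet {x | φ x ≤ φ a + 1} :=
    (isClosed_le h_cont continuous_const).measurableSet
  set V : ℝ := (volume {x | φ x ≤ φ a + 1}).toReal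
  have hV0 : 0 < V := by
    refine lt_of_lt_of_le ?_ (h_growth (a + 1))
    have := hmin (a + 1)
    rw [add_sub_cancel_left, abs_one]
    exact div_pos one_pos (by linarith)
  have h_bound : ∀ x, Real.exp (-φ x) ≤
      Real.exp 1 * Real.exp (-φ a) * Real.exp (-(|x - a| / V)) := fun x ↦ by
    have hx := hmin x
    have h : |x - a| / V ≤ 1 + (φ x - φ a) := by
      rw [div_le_comm₀ hV0 (by linarith)]
      exact h_growth x
    rw [← Real.exp_add, ← Real.exp_add, Real.exp_le_exp]
    linarith
  have h_dom := (integrable_exp_neg_abs_sub_div a hV0).const_mul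
    (Real.exp 1 * Real.exp (-φ a))
  have h_int : Integrable fun x ↦ Real.exp (-φ x) :=
    h_dom.mono' (by fun_prop) (ae_of_all _ fun x ↦ by
      rw [Real.norm_of_nonneg (Real.exp_pos _).le]
      exact h_bound x)
  constructor
  · calc Real.exp (-1) * (V * Real.exp (-φ a))
        = Real.exp (-1 - φ a) * V := by rw [sub_eq_add_neg, Real.exp_add]; ring
      _ ≤ ∫ x in {x | φ x ≤ φ a + 1}, Real.exp (-φ x) :=
          setIntegral_ge_of_const_le_real h_meas hfin
            (fun x (hx : φ x ≤ φ a + 1) ↦ Real.exp_le_exp.2 (by linarith))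
            h_int.integrableOn
      _ ≤ ∫ x, Real.exp (-φ x) :=
          setIntegral_le_integral h_int (ae_of_all _ fun x ↦ (Real.exp_pos _).le)
  · calc ∫ x, Real.exp (-φ x)
        ≤ ∫ x, Real.exp 1 * Real.exp (-φ a) * Real.exp (-(|x - a| / V)) :=
          integral_mono h_int h_dom h_bound
      _ = 2 * Real.exp 1 * (V * Real.exp (-φ a)) := by
          rw [integral_const_mul, integral_exp_neg_abs_sub_div a hV0]
          ring
end

section
/- Let P : ℂ → ℝ be smooth and subharmonic, and let Ω = {(z, z₂) ∈ ℂ² : Im z₂ > P(z)}. Let F be holomorphic on Ω with ∫_Ω |F|² dm < ∞, where dm is Lebesgue measure on ℂ² ≅ ℝ⁴. Then for every ε₀ > 0, ∫_{ℂ×ℝ} |F(z, t + i(P(z)+ε₀))|² dm(z,t) ≤ ε₀^{−1} ∫_Ω |F|² dm, where dm(z,t) is Lebesgue measure on ℂ × ℝ ≅ ℝ³. -/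
open MeasureTheory Complex

/-- The Laplacian of a function `P : ℂ → ℝ`, as the sum of the two pure second
partial derivatives in the directions `1` and `I`. -/
noncomputable def laplacian (P : ℂ → ℝ) (z : ℂ) : ℝ :=
  iteratedFDeriv ℝ 2 P z ![1, 1] + iteratedFDeriv ℝ 2 P z ![Complex.I, Complex.I]

lemma measurable_indicator_of_continuousOn {X : Type*} [TopologicalSpace X] [MeasurableSpace X]
    [BorelSpace X] {s : Set X} {f : X → ENNReal} (hs : MeasurableSet s) (hf : ContinuousOn f s) :
    Measurable (s.indicator f) := by
  classical
  rw [← Set.piecewise_eq_indicator]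
  exact hf.measurable_piecewise continuousOn_const hs

open Metric Set in
/-- The mean value inequality for the norm of a holomorphic function, on a circle. -/
lemma two_pi_mul_enorm_le_lintegral_circleMap {f : ℂ → ℂ} {c : ℂ} {r : ℝ}
    (hf : DiffContOnCl ℂ f (ball c |r|)) :
    ENNReal.ofReal (2 * Real.pi) * ‖f c‖ₑ ≤
      ∫⁻ θ in Ioo (-Real.pi) Real.pi, ‖f (circleMap c r θ)‖ₑ := by
  have h := hf.circleAverage
  rw [Real.circleAverage_eq_integral_add (-Real.pi),
    intervalIntegral.integral_comp_add_right (fun θ => f (circleMap c r θ))] at h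
  have hpi := Real.pi_pos
  have h' : (2 * Real.pi) • f c = ∫ θ in Ioo (-Real.pi) Real.pi, f (circleMap c r θ) := by
    rw [← h, smul_smul, mul_inv_cancel₀ (by positivity), one_smul,
      intervalIntegral.integral_of_le (by linarith), integral_Ioc_eq_integral_Ioo]
    congr 3 <;> ring
  calc ENNReal.ofReal (2 * Real.pi) * ‖f c‖ₑ = ‖(2 * Real.pi) • f c‖ₑ := by
        rw [enorm_smul, Real.enorm_of_nonneg (by positivity)]
    _ ≤ _ := by
        rw [h']
        exact enorm_integral_le_lintegral_enorm _

open Metric Set in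
/-- The mean value inequality for the norm of a holomorphic function, on a disc. -/
lemma pi_mul_sq_mul_enorm_le_lintegral_ball {f : ℂ → ℂ} {c : ℂ} {R : ℝ} (hR : 0 ≤ R)
    (hf : DifferentiableOn ℂ f (ball c R)) :
    ENNReal.ofReal (Real.pi * R ^ 2) * ‖f c‖ₑ ≤ ∫⁻ w in ball c R, ‖f w‖ₑ := by
  have hball : ∀ p ∈ Ioo 0 R ×ˢ Ioo (-Real.pi) Real.pi, circleMap c p.1 p.2 ∈ ball c R := by
    rintro p ⟨hp, -⟩
    simpa [circleMap, abs_of_pos hp.1] using hp.2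
  have hcm : Continuous fun p : ℝ × ℝ => circleMap c p.1 p.2 := by
    unfold circleMap
    fun_prop
  have hmeas : AEMeasurable (fun p : ℝ × ℝ => ENNReal.ofReal p.1 * ‖f (circleMap c p.1 p.2)‖ₑ)
      ((volume.restrict (Ioo 0 R)).prod (volume.restrict (Ioo (-Real.pi) Real.pi))) := by
    rw [Measure.prod_restrict]
    refine AEMeasurable.mul (by fun_prop) (AEMeasurable.enorm ?_)
    exact (hf.continuousOn.comp hcm.continuousOn hball).aemeasurable
      (measurableSet_Ioo.prod measurableSet_Ioo)
  have hrad : ∫⁻ r in Ioo 0 R, ENNReal.ofReal r = ENNReal.ofReal (R ^ 2 / 2) := by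
    rw [← ofReal_integral_eq_lintegral_ofReal (μ := volume.restrict (Ioo 0 R))
      (f := fun r : ℝ => r)
      ((continuous_id.integrableOn_Icc).mono_set Ioo_subset_Icc_self)
      ((ae_restrict_mem measurableSet_Ioo).mono fun r hr => hr.1.le),
      ← integral_Ioc_eq_integral_Ioo, ← intervalIntegral.integral_of_le hR]
    simp
  calc ENNReal.ofReal (Real.pi * R ^ 2) * ‖f c‖ₑ
      = ∫⁻ r in Ioo 0 R, ENNReal.ofReal r * (ENNReal.ofReal (2 * Real.pi) * ‖f c‖ₑ) := by
        rw [lintegral_mul_const _ (by fun_prop), hrad, ← mul_assoc,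
          ← ENNReal.ofReal_mul (by positivity)]
        congr 2
        ring
    _ ≤ ∫⁻ r in Ioo 0 R, ∫⁻ θ in Ioo (-Real.pi) Real.pi,
          ENNReal.ofReal r * ‖f (circleMap c r θ)‖ₑ := by
        refine setLIntegral_mono' measurableSet_Ioo fun r hr => ?_
        rw [lintegral_const_mul' _ _ ENNReal.ofReal_ne_top]
        gcongr
        refine two_pi_mul_enorm_le_lintegral_circleMap (DifferentiableOn.diffContOnCl ?_)
        rw [abs_of_pos hr.1]
        exact hf.mono (closure_ball_subset_closedBall.trans (closedBall_subset_ball hr.2))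
    _ = ∫⁻ p in Ioo 0 R ×ˢ Ioo (-Real.pi) Real.pi,
          ENNReal.ofReal p.1 * ‖f (circleMap c p.1 p.2)‖ₑ := by
        rw [← lintegral_prod _ hmeas, Measure.prod_restrict]
        rfl
    _ = ∫⁻ p in Ioo 0 R ×ˢ Ioo (-Real.pi) Real.pi, ENNReal.ofReal p.1 •
          (ball c R).indicator (fun w => ‖f w‖ₑ) (c + Complex.polarCoord.symm p) := by
        refine setLIntegral_congr_fun (measurableSet_Ioo.prod measurableSet_Ioo) fun p hp => ?_
        have hsymm : c + Complex.polarCoord.symm p = circleMap c p.1 p.2 := by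
          rw [Complex.polarCoord_symm_apply, circleMap, Complex.exp_mul_I]
          simp
        simp only [hsymm, indicator_of_mem (hball p hp), smul_eq_mul]
    _ ≤ ∫⁻ p in polarCoord.target, ENNReal.ofReal p.1 •
          (ball c R).indicator (fun w => ‖f w‖ₑ) (c + Complex.polarCoord.symm p) :=
        lintegral_mono_set (prod_mono Ioo_subset_Ioi_self subset_rfl)
    _ = ∫⁻ w in ball c R, ‖f w‖ₑ := by
        rw [Complex.lintegral_comp_polarCoord_symm
            (fun w => (ball c R).indicator (fun w => ‖f w‖ₑ) (c + w)),
          lintegral_add_left_eq_self, lintegral_indicator measurableSet_ball]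

open Metric Set in
/-- Integrals over discs of radius `ε` centred on a horizontal line are controlled by
the integral over the half-plane containing them. -/
lemma lintegral_lintegral_ball_le {g : ℂ → ENNReal} (hg : Measurable g) (a ε : ℝ) :
    ∫⁻ t : ℝ, ∫⁻ w in ball ((t : ℂ) + (a + ε : ℝ) * Complex.I) ε, g w ≤
      ENNReal.ofReal (2 * ε) * ∫⁻ w in {w : ℂ | a < w.im}, g w := by
  have hS : MeasurableSet {p : ℝ × ℂ | p.2 ∈ ball ((p.1 : ℂ) + (a + ε : ℝ) * Complex.I) ε} :=
    (isOpen_lt (f := fun p : ℝ × ℂ => dist p.2 ((p.1 : ℂ) + (a + ε : ℝ) * Complex.I))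
      (by fun_prop) continuous_const).measurableSet
  have hH : MeasurableSet {w : ℂ | a < w.im} :=
    (isOpen_lt continuous_const Complex.continuous_im).measurableSet
  have hmeas : Measurable (Function.uncurry fun (t : ℝ) (w : ℂ) =>
      (ball ((t : ℂ) + (a + ε : ℝ) * Complex.I) ε).indicator g w) :=
    (hg.comp measurable_snd).indicator hS
  simp_rw [← lintegral_indicator measurableSet_ball]
  rw [lintegral_lintegral_swap hmeas.aemeasurable, ← lintegral_indicator hH,
    ← lintegral_const_mul _ (hg.indicator hH)]
  refine lintegral_mono fun w => ?_
  have himp : ∀ t : ℝ, w ∈ ball ((t : ℂ) + (a + ε : ℝ) * Complex.I) ε →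
      a < w.im ∧ t ∈ ball w.re ε := by
    intro t ht
    rw [mem_ball, dist_eq_norm] at ht
    have h1 := (Complex.abs_im_le_norm _).trans_lt ht
    have h2 := (Complex.abs_re_le_norm _).trans_lt ht
    simp only [Complex.sub_im, Complex.add_im, Complex.ofReal_im, Complex.im_ofReal_mul,
      Complex.I_im, Complex.sub_re, Complex.add_re, Complex.ofReal_re, Complex.re_ofReal_mul,
      Complex.I_re, abs_lt] at h1 h2
    rw [mem_ball, Real.dist_eq, abs_lt]
    refine ⟨?_, ?_, ?_⟩ <;> linarith
  calc ∫⁻ t : ℝ, (ball ((t : ℂ) + (a + ε : ℝ) * Complex.I) ε).indicator g w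
      ≤ ∫⁻ t : ℝ, (ball w.re ε).indicator (fun _ => {w : ℂ | a < w.im}.indicator g w) t := by
        refine lintegral_mono fun t => indicator_apply_le' (fun ht => ?_) fun _ => zero_le
        obtain ⟨him, hre⟩ := himp t ht
        rw [indicator_of_mem hre, indicator_of_mem (show w ∈ {w : ℂ | a < w.im} from him)]
    _ = ENNReal.ofReal (2 * ε) * {w : ℂ | a < w.im}.indicator g w := by
        rw [lintegral_indicator_const measurableSet_ball, Real.volume_ball, mul_comm]

/-- A holomorphic function on a half-plane has its `L²` norm on horizontal lines controlled by its
`L²` norm on the half-plane. -/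
lemma lintegral_horizontal_line_le {G : ℂ → ℂ} {a ε : ℝ} (hε : 0 < ε)
    (hG : DifferentiableOn ℂ G {w : ℂ | a < w.im}) :
    ∫⁻ t : ℝ, ENNReal.ofReal (‖G ((t : ℂ) + (a + ε : ℝ) * Complex.I)‖ ^ 2) ≤
      ENNReal.ofReal ε⁻¹ * ∫⁻ w in {w : ℂ | a < w.im}, ENNReal.ofReal (‖G w‖ ^ 2) := by
  set H : Set ℂ := {w : ℂ | a < w.im} with hHdef
  have hH : MeasurableSet H :=
    (isOpen_lt continuous_const Complex.continuous_im).measurableSet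
  have hnorm : ∀ w, ENNReal.ofReal (‖G w‖ ^ 2) = ‖G w ^ 2‖ₑ := fun w => by
    rw [← norm_pow, ofReal_norm]
  simp_rw [hnorm]
  have hsub : ∀ t : ℝ, Metric.ball ((t : ℂ) + (a + ε : ℝ) * Complex.I) ε ⊆ H := by
    intro t w ht
    rw [Metric.mem_ball, dist_eq_norm] at ht
    have h1 := (Complex.abs_im_le_norm _).trans_lt ht
    simp only [Complex.sub_im, Complex.add_im, Complex.ofReal_im, Complex.im_ofReal_mul,
      Complex.I_im, abs_lt] at h1
    rw [hHdef, Set.mem_ofPred_eq]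
    linarith
  have hg : Measurable (H.indicator fun w => ‖G w ^ 2‖ₑ) :=
    measurable_indicator_of_continuousOn hH (hG.continuousOn.pow 2).enorm
  have hpt : ∀ t : ℝ, ENNReal.ofReal (Real.pi * ε ^ 2) *
      ‖G ((t : ℂ) + (a + ε : ℝ) * Complex.I) ^ 2‖ₑ ≤
        ∫⁻ w in Metric.ball ((t : ℂ) + (a + ε : ℝ) * Complex.I) ε,
          H.indicator (fun w => ‖G w ^ 2‖ₑ) w := by
    intro t
    refine (pi_mul_sq_mul_enorm_le_lintegral_ball hε.le ((hG.mono (hsub t)).pow 2)).trans_eq ?_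
    exact setLIntegral_congr_fun measurableSet_ball fun w hw =>
      (Set.indicator_of_mem (hsub t hw) fun w => ‖G w ^ 2‖ₑ).symm
  have hmain := (lintegral_mono hpt).trans (lintegral_lintegral_ball_le hg a ε)
  rw [lintegral_const_mul' _ _ ENNReal.ofReal_ne_top, setLIntegral_indicator hH, Set.inter_self]
    at hmain
  have hc : (1 : ENNReal) ≤ ENNReal.ofReal (ε⁻¹ * (2 * ε)⁻¹ * (Real.pi * ε ^ 2)) := by
    rw [ENNReal.one_le_ofReal]
    field_simp
    linarith [Real.two_le_pi]
  have hc' : ENNReal.ofReal (ε⁻¹ * (2 * ε)⁻¹) * ENNReal.ofReal (2 * ε) = ENNReal.ofReal ε⁻¹ := by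
    rw [← ENNReal.ofReal_mul (by positivity)]
    congr 1
    field_simp
  calc _ ≤ ENNReal.ofReal (ε⁻¹ * (2 * ε)⁻¹ * (Real.pi * ε ^ 2)) *
          ∫⁻ t : ℝ, ‖G ((t : ℂ) + (a + ε : ℝ) * Complex.I) ^ 2‖ₑ := le_mul_of_one_le_left' hc
    _ ≤ _ := by
        rw [ENNReal.ofReal_mul (by positivity), mul_assoc, ← hc', mul_assoc]
        gcongr

/-- Proposition B.3(i): let `P : ℂ → ℝ` be smooth and subharmonic,
`Ω = {(z,z₂) : Im z₂ > P(z)}`, and let `F` be holomorphic on `Ω` and square-integrable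
on `Ω`. Then for every `ε₀ > 0`,
`∫_{ℂ×ℝ} |F(z, t + i(P(z)+ε₀))|² dm(z,t) ≤ ε₀⁻¹ ∫_Ω |F|² dm`. -/
theorem statement18 (P : ℂ → ℝ) (hP : ContDiff ℝ (⊤ : ℕ∞) P)
    (hsub : ∀ z : ℂ, 0 ≤ laplacian P z)
    (F : ℂ × ℂ → ℂ)
    (hF : DifferentiableOn ℂ F {p : ℂ × ℂ | P p.1 < p.2.im})
    (hL2 : (∫⁻ p in {p : ℂ × ℂ | P p.1 < p.2.im},
      ENNReal.ofReal (‖F p‖ ^ 2)) < ⊤)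
    (ε₀ : ℝ) (hε₀ : 0 < ε₀) :
    (∫⁻ q : ℂ × ℝ,
        ENNReal.ofReal (‖F (q.1, (q.2 : ℂ) + (P q.1 + ε₀ : ℝ) * Complex.I)‖ ^ 2)) ≤
      ENNReal.ofReal ε₀⁻¹ *
        ∫⁻ p in {p : ℂ × ℂ | P p.1 < p.2.im}, ENNReal.ofReal (‖F p‖ ^ 2) := by
  have hcont : ContinuousOn (fun p => ENNReal.ofReal (‖F p‖ ^ 2))
      {p : ℂ × ℂ | P p.1 < p.2.im} :=
    ENNReal.continuous_ofReal.comp_continuousOn (hF.continuousOn.norm.pow 2)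
  have hPc : Continuous P := hP.continuous
  have hΩ : MeasurableSet {p : ℂ × ℂ | P p.1 < p.2.im} :=
    (isOpen_lt (by fun_prop) (by fun_prop)).measurableSet
  have hright : Measurable ({p : ℂ × ℂ | P p.1 < p.2.im}.indicator
      fun p => ENNReal.ofReal (‖F p‖ ^ 2)) :=
    measurable_indicator_of_continuousOn hΩ hcont
  have hleft : Continuous fun q : ℂ × ℝ =>
      ENNReal.ofReal (‖F (q.1, (q.2 : ℂ) + (P q.1 + ε₀ : ℝ) * Complex.I)‖ ^ 2) :=
    hcont.comp_continuous (f := fun q : ℂ × ℝ => (q.1, (q.2 : ℂ) + (P q.1 + ε₀ : ℝ) * Complex.I))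
      (by fun_prop) (fun q => by simpa using hε₀)
  rw [← lintegral_indicator hΩ, Measure.volume_eq_prod, Measure.volume_eq_prod,
    lintegral_prod _ hleft.measurable.aemeasurable, lintegral_prod _ hright.aemeasurable,
    ← lintegral_const_mul _ hright.lintegral_prod_right']
  refine lintegral_mono fun z => ?_
  have hG : DifferentiableOn ℂ (fun w => F (z, w)) {w : ℂ | P z < w.im} :=
    hF.comp (by fun_prop) fun w hw => hw
  refine (lintegral_horizontal_line_le hε₀ hG).trans_eq ?_
  rw [← lintegral_indicator (isOpen_lt continuous_const Complex.continuous_im).measurableSet]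
  rfl
end

section
/- Let P : ℂ → ℝ be smooth, subharmonic and non-harmonic, and let Ω = {(z, z₂) ∈ ℂ² : Im z₂ > P(z)}. Let F be holomorphic on Ω with ‖F‖²_{H²(Ω)} := sup_{ε>0} ∫_{ℂ×ℝ} |F(z, t + i(P(z)+ε))|² dm(z,t) < ∞. Then for every ε₀ > 0, ∫_Ω |(∂F/∂z₂)(z, z₂ + iε₀)|² dm(z, z₂) ≤ (1/(4e)) ε₀^{−1} ‖F‖²_{H²(Ω)}, where ∂F/∂z₂ denotes the complex derivative of F in the second coordinate and dm is Lebesgue measure on ℂ² ≅ ℝ⁴. -/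
open MeasureTheory Complex

open Set Filter Topology
open scoped ComplexConjugate

/-- Bounded midpoint log-convex functions drop slowly: the decrement over a step of length `k`
is controlled by the number of steps available to the left. -/
lemma sub_le_of_midpoint_logConvex {Φ : ℝ → ℝ} {N : ℝ} (h0 : ∀ y, 0 < y → 0 ≤ Φ y)
    (hN : ∀ y, 0 < y → Φ y ≤ N)
    (hlog : ∀ a b, 0 < a → 0 < b → Φ ((a + b) / 2) ^ 2 ≤ Φ a * Φ b)
    {m : ℕ} (hm : 0 < m) {k y : ℝ} (hk : 0 < k) (hy : m * k < y) :
    Φ y - Φ (y + k) ≤ N / (m * Real.exp 1) := by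
  have hm' : (0 : ℝ) < m := by exact_mod_cast hm
  have hy0 : 0 < y := lt_trans (by positivity) hy
  have hNn : 0 ≤ N := (h0 y hy0).trans (hN y hy0)
  have hrhs : 0 ≤ N / (m * Real.exp 1) := by positivity
  rcases (h0 y hy0).eq_or_lt with hz | hpos
  · have := h0 (y + k) (by positivity)
    linarith
  set r := Φ (y + k) / Φ y with hr
  have hr0 : 0 ≤ r := div_nonneg (h0 _ (by positivity)) hpos.le
  have step : ∀ j : ℕ, j ≤ m →
      0 < Φ (y - j * k) ∧ Φ (y - j * k + k) ≤ r * Φ (y - j * k) := by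
    intro j
    induction j with
    | zero =>
      intro _
      simp only [Nat.cast_zero, zero_mul, sub_zero]
      exact ⟨hpos, by rw [hr, div_mul_cancel₀ _ hpos.ne']⟩
    | succ j ih =>
      intro hj
      obtain ⟨h1, h2⟩ := ih (by omega)
      have hjm : ((j + 1 : ℕ) : ℝ) ≤ m := by exact_mod_cast hj
      push_cast at hjm ⊢
      have hpos' : 0 < y - (j + 1) * k := by nlinarith
      have hl := hlog (y - j * k + k) (y - (j + 1) * k) (by nlinarith) hpos'
      rw [show (y - j * k + k + (y - (j + 1) * k)) / 2 = y - j * k by ring] at hl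
      have hw := h0 _ hpos'
      have hw' : 0 < Φ (y - (j + 1) * k) := by
        rcases hw.eq_or_lt with h | h
        · rw [← h] at hl; nlinarith
        · exact h
      refine ⟨hw', ?_⟩
      rw [show y - (j + 1) * k + k = y - j * k by ring]
      have : Φ (y - j * k) * Φ (y - j * k) ≤
          (r * Φ (y - (j + 1) * k)) * Φ (y - j * k) := by nlinarith
      exact le_of_mul_le_mul_right this h1
  have pow : ∀ j : ℕ, j ≤ m → Φ y ≤ r ^ j * Φ (y - j * k) := by
    intro j
    induction j with
    | zero => intro _; simp
    | succ j ih =>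
      intro hj
      have h1 := ih (by omega)
      have h2 := (step (j + 1) hj).2
      rw [show y - ((j + 1 : ℕ) : ℝ) * k + k = y - j * k by push_cast; ring] at h2
      calc Φ y ≤ r ^ j * Φ (y - j * k) := h1
        _ ≤ r ^ j * (r * Φ (y - ((j + 1 : ℕ) : ℝ) * k)) := by gcongr
        _ = _ := by ring
  have h1 : Φ y ≤ r ^ m * N :=
    (pow m le_rfl).trans (by have := hN (y - m * k) (by linarith); gcongr)
  have h2 : r ^ m ≤ Real.exp (-(m * (1 - r))) := by
    calc r ^ m ≤ Real.exp (r - 1) ^ m := by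
          gcongr
          linarith [Real.add_one_le_exp (r - 1)]
      _ = _ := by rw [← Real.exp_nat_mul]; congr 1; ring
  have h3 : Φ y - Φ (y + k) = (1 - r) * Φ y := by rw [hr]; field_simp
  rw [h3]
  rcases le_or_gt (1 - r) 0 with hneg | hpos1
  · exact (mul_nonpos_of_nonpos_of_nonneg hneg hpos.le).trans hrhs
  have h4 : m * (1 - r) * Real.exp (-(m * (1 - r))) ≤ Real.exp (-1) := by
    have h5 := Real.add_one_le_exp (m * (1 - r) - 1)
    calc m * (1 - r) * Real.exp (-(m * (1 - r)))
        ≤ Real.exp (m * (1 - r) - 1) * Real.exp (-(m * (1 - r))) := by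
          gcongr; linarith
      _ = Real.exp (-1) := by rw [← Real.exp_add]; congr 1; ring
  calc (1 - r) * Φ y ≤ (1 - r) * (Real.exp (-(m * (1 - r))) * N) := by
        gcongr; exact h1.trans (by gcongr)
    _ = (m * (1 - r) * Real.exp (-(m * (1 - r)))) * (N / m) := by field_simp
    _ ≤ Real.exp (-1) * (N / m) := by gcongr
    _ = N / (m * Real.exp 1) := by rw [Real.exp_neg]; field_simp

/-- A midpoint convex function on `(0, ∞)` that is bounded above is antitone. -/
lemma antitoneOn_of_midpoint_convex {Φ : ℝ → ℝ} {N : ℝ}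
    (hN : ∀ y, 0 < y → Φ y ≤ N)
    (hconv : ∀ a b, 0 < a → 0 < b → 2 * Φ ((a + b) / 2) ≤ Φ a + Φ b) :
    AntitoneOn Φ (Ioi 0) := by
  intro a ha b hb hab
  rw [mem_Ioi] at ha hb
  by_contra! hlt
  set d := b - a
  have hd : 0 ≤ d := sub_nonneg.2 hab
  have step : ∀ n : ℕ, Φ b - Φ a ≤ Φ (a + (n + 1) * d) - Φ (a + n * d) := by
    intro n
    induction n with
    | zero => simp [d]
    | succ n ih =>
      have := hconv (a + n * d) (a + (n + 2) * d) (by positivity) (by positivity)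
      rw [show (a + n * d + (a + (n + 2) * d)) / 2 = a + (n + 1) * d by ring] at this
      push_cast
      rw [show (n : ℝ) + 1 + 1 = n + 2 by ring]
      linarith
  have grow : ∀ n : ℕ, Φ a + n * (Φ b - Φ a) ≤ Φ (a + n * d) := by
    intro n
    induction n with
    | zero => simp
    | succ n ih =>
      have := step n
      push_cast
      linarith
  obtain ⟨n, hn⟩ := exists_nat_gt ((N - Φ a) / (Φ b - Φ a))
  rw [div_lt_iff₀ (by linarith)] at hn
  have := hN (a + n * d) (by positivity)
  linarith [grow n]

/-- The second difference of a convex antitone function telescopes under integration. -/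
lemma lintegral_second_difference_le {Φ : ℝ → ℝ} {c k B : ℝ} (hc : 0 < c) (hk : 0 < k)
    (hanti : AntitoneOn Φ (Ioi 0))
    (hconv : ∀ a b, 0 < a → 0 < b → 2 * Φ ((a + b) / 2) ≤ Φ a + Φ b)
    (hB : ∀ y, c ≤ y → Φ y - Φ (y + k) ≤ B) :
    ∫⁻ y in Ioi c, ENNReal.ofReal (Φ y + Φ (y + 2 * k) - 2 * Φ (y + k)) ≤
      ENNReal.ofReal (k * B) := by
  set D : ℝ → ℝ := fun y => Φ y - Φ (y + k) with hD
  have hΦint : ∀ s a b, 0 ≤ s → 0 < a → 0 < b →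
      IntervalIntegrable (fun y => Φ (y + s)) volume a b := by
    intro s a b hs ha hb
    refine AntitoneOn.intervalIntegrable fun x hx y hy hxy => ?_
    have hx' : 0 < x := lt_of_lt_of_le (lt_min ha hb) hx.1
    exact hanti (mem_Ioi.2 (by linarith)) (mem_Ioi.2 (by linarith)) (by linarith)
  have hDint : ∀ a b, 0 < a → 0 < b → IntervalIntegrable D volume a b := fun a b ha hb => by
    simpa using (hΦint 0 a b le_rfl ha hb).sub (hΦint k a b hk.le ha hb)
  have hDint' : ∀ a b, 0 < a → 0 < b → IntervalIntegrable (fun y => D (y + k)) volume a b := by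
    intro a b ha hb
    have := (hDint (a + k) (b + k) (by linarith) (by linarith)).comp_add_right k
    simpa using this
  have hunion : Ioi c = ⋃ n : ℕ, Ioc c (c + n) := by
    ext y
    simp only [mem_Ioi, mem_iUnion, mem_Ioc]
    refine ⟨fun h => ?_, fun ⟨n, h⟩ => h.1⟩
    obtain ⟨n, hn⟩ := exists_nat_ge (y - c)
    exact ⟨n, h, by linarith⟩
  have hmono : Monotone fun n : ℕ => Ioc c (c + n) := fun i j hij =>
    Ioc_subset_Ioc_right (by have : (i : ℝ) ≤ j := by exact_mod_cast hij
                             linarith)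
  rw [hunion, setLIntegral_iUnion_of_directed _ hmono.directed_le]
  refine iSup_le fun n => ?_
  have hn : c ≤ c + n := by linarith [n.cast_nonneg (α := ℝ)]
  have hfun : (fun y => Φ y + Φ (y + 2 * k) - 2 * Φ (y + k)) = fun y => D y - D (y + k) := by
    funext y
    simp only [hD]
    rw [show y + k + k = y + 2 * k by ring]
    ring
  have hint : IntervalIntegrable (fun y => D y - D (y + k)) volume c (c + n) :=
    (hDint _ _ hc (by linarith)).sub (hDint' _ _ hc (by linarith))
  have heq : ∫⁻ y in Ioc c (c + n), ENNReal.ofReal (Φ y + Φ (y + 2 * k) - 2 * Φ (y + k)) =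
      ENNReal.ofReal (∫ y in c..(c + n), (D y - D (y + k))) := by
    rw [intervalIntegral.integral_of_le hn, ofReal_integral_eq_lintegral_ofReal]
    · exact lintegral_congr fun y => by rw [congrFun hfun y]
    · exact (intervalIntegrable_iff_integrableOn_Ioc_of_le hn).1 hint
    · refine (ae_restrict_iff' measurableSet_Ioc).2 (ae_of_all _ fun y hy => ?_)
      have hy0 : 0 < y := hc.trans hy.1
      have := hconv y (y + 2 * k) hy0 (by positivity)
      rw [show (y + (y + 2 * k)) / 2 = y + k by ring] at this
      rw [← hfun]
      simp only [Pi.zero_apply]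
      linarith
  rw [heq]
  refine ENNReal.ofReal_le_ofReal ?_
  rw [intervalIntegral.integral_sub (hDint _ _ hc (by linarith)) (hDint' _ _ hc (by linarith)),
    intervalIntegral.integral_comp_add_right]
  have hswap : (∫ y in c..(c + n), D y) - ∫ y in (c + k)..(c + n + k), D y =
      (∫ y in c..(c + k), D y) - ∫ y in (c + n)..(c + n + k), D y :=
    intervalIntegral.integral_interval_sub_interval_comm (hDint _ _ hc (by linarith))
      (hDint _ _ (by linarith) (by linarith)) (hDint _ _ hc (by linarith))
  rw [hswap]
  have h1 : 0 ≤ ∫ y in (c + n)..(c + n + k), D y := by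
    refine intervalIntegral.integral_nonneg (by linarith) fun y hy => ?_
    have hy0 : 0 < y := by linarith [hy.1]
    exact sub_nonneg.2 (hanti (mem_Ioi.2 hy0) (mem_Ioi.2 (by linarith)) (by linarith))
  have h2 : ∫ y in c..(c + k), D y ≤ ∫ _ in c..(c + k), B :=
    intervalIntegral.integral_mono_on (by linarith) (hDint _ _ hc (by linarith)) (by simp)
      fun y hy => hB y hy.1
  simp at h2
  linarith

/-- Horizontal contour shift in a strip, for functions integrable on both lines and whose
vertical integrals are integrable. -/
lemma integral_horizontal_line_eq {h : ℂ → ℂ} {s₁ s₂ : ℝ}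
    (hd : DifferentiableOn ℂ h {w | w.im ∈ uIcc s₁ s₂})
    (h₁ : Integrable fun t : ℝ => h (t + s₁ * I)) (h₂ : Integrable fun t : ℝ => h (t + s₂ * I))
    (hW : Integrable fun t : ℝ => ∫ s in s₁..s₂, h (t + s * I)) :
    ∫ t : ℝ, h (t + s₁ * I) = ∫ t : ℝ, h (t + s₂ * I) := by
  set W : ℝ → ℂ := fun t => ∫ s in s₁..s₂, h (t + s * I)
  have hrect : ∀ T : ℝ, (∫ t in (-T)..T, h (t + s₁ * I)) - (∫ t in (-T)..T, h (t + s₂ * I)) =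
      I * (W (-T) - W T) := by
    intro T
    have := integral_boundary_rect_eq_zero_of_differentiableOn h (⟨-T, s₁⟩ : ℂ) ⟨T, s₂⟩
      (hd.mono fun w hw => hw.2)
    simp only [smul_eq_mul] at this
    linear_combination this
  have hlim : Tendsto (fun T => I * (W (-T) - W T)) atTop
      (𝓝 ((∫ t : ℝ, h (t + s₁ * I)) - ∫ t : ℝ, h (t + s₂ * I))) := by
    simp_rw [← hrect]
    exact (intervalIntegral_tendsto_integral h₁ tendsto_neg_atTop_atBot tendsto_id).sub
      (intervalIntegral_tendsto_integral h₂ tendsto_neg_atTop_atBot tendsto_id)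
  have hint : Integrable fun T => I * (W (-T) - W T) := (hW.comp_neg.sub hW).const_mul I
  refine sub_eq_zero.1 ((hint.integrableAtFilter atTop).eq_zero_of_tendsto ?_ hlim)
  intro s hs
  obtain ⟨b, hb⟩ := mem_atTop_sets.1 hs
  rw [← top_le_iff, ← Real.volume_Ici (a := b)]
  exact measure_mono hb

/-- The restriction of `F` to the translate by `y` of the graph of `P`. -/
noncomputable def graphSlice (P : ℂ → ℝ) (F : ℂ × ℂ → ℂ) (y : ℝ) (q : ℂ × ℝ) : ℂ :=
  F (q.1, (q.2 : ℂ) + (P q.1 + y : ℝ) * I)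

lemma measurable_graphSlice {P : ℂ → ℝ} {F : ℂ × ℂ → ℂ} (hP : Continuous P) (hFm : Measurable F) :
    Measurable fun x : ℝ × (ℂ × ℝ) => graphSlice P F x.1 x.2 := by
  unfold graphSlice
  exact hFm.comp (by fun_prop)

lemma memLp_graphSlice {P : ℂ → ℝ} {F : ℂ × ℂ → ℂ} (hP : Continuous P) (hFm : Measurable F)
    {N y : ℝ} (hN : ∫⁻ q, ENNReal.ofReal (‖graphSlice P F y q‖ ^ 2) ≤ ENNReal.ofReal N) :
    MemLp (graphSlice P F y) 2 := by
  have hm : Measurable (graphSlice P F y) :=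
    (measurable_graphSlice hP hFm).comp measurable_prodMk_left
  rw [memLp_two_iff_integrable_sq_norm hm.aestronglyMeasurable]
  refine ⟨by fun_prop, ?_⟩
  rw [hasFiniteIntegral_iff_ofReal (ae_of_all _ fun q => by positivity)]
  exact hN.trans_lt ENNReal.ofReal_lt_top

/-- The holomorphic function whose values on horizontal lines are the products
`f(t + i(p + s)) * conj f(t + i(p + σ - s))`. -/
lemma differentiableAt_reflected_mul {f : ℂ → ℂ} {p σ : ℝ}
    (hf : ∀ w : ℂ, p < w.im → DifferentiableAt ℂ f w) {w : ℂ} (h0 : 0 < w.im) (h1 : w.im < σ) :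
    DifferentiableAt ℂ (fun w => f (w + p * I) * conj (f (conj w + (p + σ : ℝ) * I))) w := by
  refine DifferentiableAt.mul ?_ ?_
  · exact (hf (w + p * I) (by simpa using h0)).comp w (by fun_prop)
  · have hg : DifferentiableAt ℂ (fun w => f (w + (p + σ : ℝ) * I)) (conj w) :=
      (hf (conj w + (p + σ : ℝ) * I) (by simp; linarith)).comp (conj w)
        (f := fun w => w + (p + σ : ℝ) * I) (by fun_prop)
    simpa [Function.comp_def] using hg.conj_conj

/-- The inner product of two slices depends only on the sum of their heights. -/
lemma integral_graphSlice_mul_conj {P : ℂ → ℝ} {F : ℂ × ℂ → ℂ} (hP : Continuous P)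
    (hFm : Measurable F) (hF : DifferentiableOn ℂ F {p : ℂ × ℂ | P p.1 < p.2.im}) {N : ℝ}
    (hN : ∀ y, 0 < y → ∫⁻ q, ENNReal.ofReal (‖graphSlice P F y q‖ ^ 2) ≤ ENNReal.ofReal N)
    {σ s₁ s₂ : ℝ} (h₁ : s₁ ∈ Ioo 0 σ) (h₂ : s₂ ∈ Ioo 0 σ) :
    ∫ q, graphSlice P F s₁ q * conj (graphSlice P F (σ - s₁) q) =
      ∫ q, graphSlice P F s₂ q * conj (graphSlice P F (σ - s₂) q) := by
  have hΩ : IsOpen {p : ℂ × ℂ | P p.1 < p.2.im} := isOpen_lt (by fun_prop) (by fun_prop)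
  have hGm := measurable_graphSlice hP hFm
  set H : (ℂ × ℝ) × ℝ → ℂ :=
    fun x => graphSlice P F x.2 x.1 * conj (graphSlice P F (σ - x.2) x.1) with hH
  have hsub : uIcc s₁ s₂ ⊆ Ioo 0 σ := (convex_Ioo 0 σ).ordConnected.uIcc_subset h₁ h₂
  have hG1 : Measurable fun x : (ℂ × ℝ) × ℝ => graphSlice P F x.2 x.1 :=
    hGm.comp (measurable_snd.prodMk measurable_fst)
  have hG2 : Measurable fun x : (ℂ × ℝ) × ℝ => graphSlice P F (σ - x.2) x.1 :=
    hGm.comp ((measurable_const.sub measurable_snd).prodMk measurable_fst)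
  have hHm : Measurable H := hG1.mul (continuous_conj.measurable.comp hG2)
  have hline : ∀ s ∈ Ioo 0 σ, Integrable fun q => H (q, s) := fun s hs =>
    (memLp_graphSlice hP hFm (hN s hs.1)).integrable_mul
      (memLp_graphSlice hP hFm (hN (σ - s) (sub_pos.2 hs.2))).star
  have hsq : ∀ g : (ℂ × ℝ) × ℝ → ℂ, Measurable g →
      (∀ s ∈ Ioo 0 σ, ∫⁻ q, ENNReal.ofReal (‖g (q, s)‖ ^ 2) ≤ ENNReal.ofReal N) →
      Integrable (fun x => ‖g x‖ ^ 2)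
        ((volume : Measure (ℂ × ℝ)).prod (volume.restrict (uIoc s₁ s₂))) := by
    intro g hg hb
    refine ⟨by fun_prop, ?_⟩
    rw [hasFiniteIntegral_iff_ofReal (ae_of_all _ fun q => by positivity),
      lintegral_prod_symm' _ (by fun_prop)]
    calc _ ≤ ∫⁻ _ in uIoc s₁ s₂, ENNReal.ofReal N :=
          setLIntegral_mono measurable_const fun s hs => hb s (hsub (uIoc_subset_uIcc hs))
      _ < ⊤ := by
          rw [setLIntegral_const]
          exact ENNReal.mul_lt_top ENNReal.ofReal_lt_top (by simp [uIoc])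
  have hHint : Integrable H
      ((volume : Measure (ℂ × ℝ)).prod (volume.restrict (uIoc s₁ s₂))) := by
    have hs1 := hsq _ hG1 fun s hs => hN s hs.1
    have hs2 := hsq _ hG2 fun s hs => hN (σ - s) (sub_pos.2 hs.2)
    refine (hs1.add hs2).mono' hHm.aestronglyMeasurable
      (ae_of_all _ fun x => ?_)
    simp only [hH, norm_mul, RCLike.norm_conj, Pi.add_apply]
    nlinarith [sq_nonneg (‖graphSlice P F x.2 x.1‖ - ‖graphSlice P F (σ - x.2) x.1‖),
      norm_nonneg (graphSlice P F x.2 x.1), norm_nonneg (graphSlice P F (σ - x.2) x.1)]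
  have hW : Integrable fun q : ℂ × ℝ => ∫ s in s₁..s₂, H (q, s) := by
    simp_rw [intervalIntegral.intervalIntegral_eq_integral_uIoc]
    exact hHint.integral_prod_left.smul _
  rw [Measure.volume_eq_prod] at hW
  have hI₁ := hline s₁ h₁
  have hI₂ := hline s₂ h₂
  rw [Measure.volume_eq_prod] at hI₁ hI₂
  change ∫ q, H (q, s₁) = ∫ q, H (q, s₂)
  rw [Measure.volume_eq_prod, integral_prod _ hI₁, integral_prod _ hI₂]
  refine integral_congr_ae ?_
  filter_upwards [hW.prod_right_ae, hI₁.prod_right_ae, hI₂.prod_right_ae] with z hz hz₁ hz₂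
  set h : ℂ → ℂ := fun w => F (z, w + P z * I) * conj (F (z, conj w + (P z + σ : ℝ) * I)) with hh
  have hval : ∀ t s : ℝ, H ((z, t), s) = h (t + s * I) := by
    intro t s
    simp only [hH, hh, graphSlice]
    congr 3
    · push_cast; ring_nf
    · congr 1
      simp only [map_add, map_mul, conj_ofReal, conj_I]
      push_cast; ring_nf
  simp only [hval] at hz hz₁ hz₂ ⊢
  refine integral_horizontal_line_eq (fun w hw => ?_) hz₁ hz₂ hz
  have hw' := hsub hw
  refine (differentiableAt_reflected_mul (f := fun w => F (z, w)) (p := P z) (fun w hw => ?_)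
    hw'.1 hw'.2).differentiableWithinAt
  exact ((hF _ hw).differentiableAt (hΩ.mem_nhds hw)).comp w (f := fun w => (z, w)) (by fun_prop)

/-- Polarization for differences of slices. -/
lemma integral_norm_sub_graphSlice {P : ℂ → ℝ} {F : ℂ × ℂ → ℂ} (hP : Continuous P)
    (hFm : Measurable F) (hF : DifferentiableOn ℂ F {p : ℂ × ℂ | P p.1 < p.2.im}) {N : ℝ}
    (hN : ∀ y, 0 < y → ∫⁻ q, ENNReal.ofReal (‖graphSlice P F y q‖ ^ 2) ≤ ENNReal.ofReal N)
    {a b : ℝ} (ha : 0 < a) (hb : 0 < b) (r : ℝ) :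
    ∫ q, ‖graphSlice P F a q - r * graphSlice P F b q‖ ^ 2 =
      (∫ q, ‖graphSlice P F b q‖ ^ 2) * (r * r) +
        (-2 * ∫ q, ‖graphSlice P F ((a + b) / 2) q‖ ^ 2) * r +
        ∫ q, ‖graphSlice P F a q‖ ^ 2 := by
  have hLp := fun y (hy : 0 < y) => memLp_graphSlice hP hFm (hN y hy)
  have hsq := fun y (hy : 0 < y) => (hLp y hy).integrable_norm_pow two_ne_zero
  have hmul : Integrable fun q => graphSlice P F a q * conj (graphSlice P F b q) :=
    (hLp a ha).integrable_mul (hLp b hb).star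
  have hpair : ∫ q, (graphSlice P F a q * conj (graphSlice P F b q)).re =
      ∫ q, ‖graphSlice P F ((a + b) / 2) q‖ ^ 2 := by
    have h := integral_graphSlice_mul_conj hP hFm hF hN (σ := a + b) (s₁ := a)
      (s₂ := (a + b) / 2) ⟨ha, by linarith⟩ ⟨by linarith, by linarith⟩
    rw [add_sub_cancel_left, show a + b - (a + b) / 2 = (a + b) / 2 by ring] at h
    have h' := congrArg re h
    simp_rw [mul_conj'] at h'
    rw [show (∫ q, (graphSlice P F a q * conj (graphSlice P F b q)).re) =
      (∫ q, graphSlice P F a q * conj (graphSlice P F b q)).re from integral_re hmul, h']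
    norm_cast
  have hpt : ∀ q, ‖graphSlice P F a q - r * graphSlice P F b q‖ ^ 2 =
      ‖graphSlice P F b q‖ ^ 2 * (r * r) +
        (graphSlice P F a q * conj (graphSlice P F b q)).re * (-2 * r) +
        ‖graphSlice P F a q‖ ^ 2 := by
    intro q
    simp only [← normSq_eq_norm_sq, normSq_apply, mul_re, mul_im, sub_re, sub_im, ofReal_re,
      ofReal_im, conj_re, conj_im]
    ring
  simp_rw [hpt]
  have h1 := (hsq b hb).mul_const (r * r)
  have h2 := (show Integrable fun q => (graphSlice P F a q * conj (graphSlice P F b q)).re from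
    hmul.re).mul_const (-2 * r)
  have h12 : Integrable fun q => ‖graphSlice P F b q‖ ^ 2 * (r * r) +
      (graphSlice P F a q * conj (graphSlice P F b q)).re * (-2 * r) := h1.add h2
  rw [integral_add h12 (hsq a ha), integral_add h1 h2, integral_mul_const,
    integral_mul_const, hpair]
  ring

/-- Fubini in the coordinates `(z, t, y) ↦ (z, t + i(P z + y))` adapted to the graph of `P`. -/
lemma setLIntegral_epigraph_eq {P : ℂ → ℝ} (hP : Continuous P) {g : ℂ × ℂ → ENNReal}
    (hg : Measurable g) (c : ℝ) :
    ∫⁻ p in {p : ℂ × ℂ | P p.1 < p.2.im}, g (p.1, p.2 + (c : ℂ) * I) =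
      ∫⁻ y in Ioi c, ∫⁻ q : ℂ × ℝ, g (q.1, (q.2 : ℂ) + (P q.1 + y : ℝ) * I) := by
  have hΩ : MeasurableSet {p : ℂ × ℂ | P p.1 < p.2.im} :=
    (isOpen_lt (by fun_prop) (by fun_prop)).measurableSet
  set k : ℂ × ℂ → ENNReal :=
    {p : ℂ × ℂ | P p.1 < p.2.im}.indicator fun p => g (p.1, p.2 + (c : ℂ) * I) with hk
  have hkm : Measurable k := (hg.comp (by fun_prop)).indicator hΩ
  have hL : ∀ z : ℂ, ∫⁻ w : ℂ, k (z, w) =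
      ∫⁻ t : ℝ, ∫⁻ y in Ioi c, g (z, (t : ℂ) + (P z + y : ℝ) * I) := by
    intro z
    rw [← volume_preserving_equiv_real_prod.symm.lintegral_comp (by fun_prop),
      Measure.volume_eq_prod,
      lintegral_prod (fun a => k (z, measurableEquivRealProd.symm a)) (by fun_prop)]
    refine lintegral_congr fun t => ?_
    rw [← lintegral_add_right_eq_self _ (P z - c), ← lintegral_indicator measurableSet_Ioi]
    refine lintegral_congr fun y => ?_
    simp only [hk, indicator, measurableEquivRealProd_symm_apply, mem_ofPred_eq, mem_Ioi]
    have : P z < y + (P z - c) ↔ c < y := by constructor <;> intro <;> linarith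
    simp only [this]
    split_ifs
    · congr 2
      apply Complex.ext <;> simp
      ring
    · rfl
  have hm : Measurable fun x : (ℂ × ℝ) × ℝ => g (x.1.1, (x.1.2 : ℂ) + (P x.1.1 + x.2 : ℝ) * I) :=
    hg.comp (by fun_prop)
  rw [← lintegral_indicator hΩ, Measure.volume_eq_prod, lintegral_prod _ hkm.aemeasurable]
  simp_rw [hL]
  rw [lintegral_lintegral_swap (f := fun (y : ℝ) (q : ℂ × ℝ) =>
    g (q.1, (q.2 : ℂ) + (P q.1 + y : ℝ) * I)) (hm.comp measurable_swap).aemeasurable,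
    Measure.volume_eq_prod, lintegral_prod _ hm.lintegral_prod_right'.aemeasurable]

/-- Vertical difference quotients of slices converge to `∂F/∂z₂` in modulus. -/
lemma tendsto_graphSlice_slope {P : ℂ → ℝ} {F : ℂ × ℂ → ℂ} (hP : Continuous P)
    (hF : DifferentiableOn ℂ F {p : ℂ × ℂ | P p.1 < p.2.im}) {y : ℝ} (hy : 0 < y) (q : ℂ × ℝ)
    {u : ℕ → ℝ} (hu : Tendsto u atTop (𝓝 0)) (hu0 : ∀ n, 0 < u n) :
    Tendsto (fun n => ENNReal.ofReal
        (‖graphSlice P F y q - (1 : ℝ) * graphSlice P F (y + u n) q‖ ^ 2 / u n ^ 2)) atTop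
      (𝓝 (ENNReal.ofReal
        (‖fderiv ℂ F (q.1, (q.2 : ℂ) + (P q.1 + y : ℝ) * I) (0, 1)‖ ^ 2))) := by
  have hΩ : IsOpen {p : ℂ × ℂ | P p.1 < p.2.im} := isOpen_lt (by fun_prop) (by fun_prop)
  set x : ℂ × ℂ := (q.1, (q.2 : ℂ) + (P q.1 + y : ℝ) * I) with hx
  have hxΩ : x ∈ {p : ℂ × ℂ | P p.1 < p.2.im} := by simp [hx, hy]
  have hFx := ((hF x hxΩ).differentiableAt (hΩ.mem_nhds hxΩ)).hasFDerivAt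
  have hcurve : HasDerivAt (fun s : ℝ => ((q.1, (q.2 : ℂ) + (P q.1 + s : ℝ) * I) : ℂ × ℂ))
      (0, I) y := by
    refine (hasDerivAt_const y q.1).prodMk ?_
    have h := (((hasDerivAt_id y).const_add (P q.1)).ofReal_comp.mul_const I).const_add (q.2 : ℂ)
    simpa using h
  have hd : HasDerivAt (fun s => graphSlice P F s q) (fderiv ℂ F x (0, I)) y :=
    HasFDerivAt.comp_hasDerivAt (l := F) (l' := (fderiv ℂ F x).restrictScalars ℝ) y
      (hFx.restrictScalars ℝ) hcurve
  have hlim := (hd.tendsto_slope_zero.comp (tendsto_nhdsWithin_iff.2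
    ⟨hu, Eventually.of_forall fun n => (hu0 n).ne'⟩)).norm.pow 2
  have hI : ‖fderiv ℂ F x (0, I)‖ = ‖fderiv ℂ F x (0, 1)‖ := by
    rw [show ((0, I) : ℂ × ℂ) = I • (0, 1) by simp, map_smul, norm_smul, norm_I, one_mul]
  rw [hI] at hlim
  refine (ENNReal.continuous_ofReal.tendsto _).comp (hlim.congr fun n => ?_)
  simp only [Function.comp, norm_smul, norm_inv, Real.norm_eq_abs, mul_pow, inv_pow, sq_abs,
    ofReal_one, one_mul]
  rw [norm_sub_rev]
  field_simp

/-- Bound for the vertical difference quotients of slices, integrated over heights above `c`. -/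
lemma lintegral_graphSlice_sub_le {P : ℂ → ℝ} {F : ℂ × ℂ → ℂ} (hP : Continuous P)
    (hFm : Measurable F) (hF : DifferentiableOn ℂ F {p : ℂ × ℂ | P p.1 < p.2.im}) {N : ℝ}
    (hN0 : 0 ≤ N)
    (hN : ∀ y, 0 < y → ∫⁻ q, ENNReal.ofReal (‖graphSlice P F y q‖ ^ 2) ≤ ENNReal.ofReal N)
    {c k : ℝ} (hc : 0 < c) (hk : 0 < k) {m : ℕ} (hm : 0 < m) (hmk : m * k < c) :
    ∫⁻ y in Ioi c, ∫⁻ q, ENNReal.ofReal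
        (‖graphSlice P F y q - (1 : ℝ) * graphSlice P F (y + 2 * k) q‖ ^ 2 / (2 * k) ^ 2) ≤
      ENNReal.ofReal (N / (4 * Real.exp 1 * (m * k))) := by
  set Φ : ℝ → ℝ := fun y => ∫ q, ‖graphSlice P F y q‖ ^ 2
  have hLp := fun y (hy : 0 < y) => memLp_graphSlice hP hFm (hN y hy)
  have hΦ0 : ∀ y, 0 < y → 0 ≤ Φ y := fun y _ => integral_nonneg fun q => by positivity
  have hΦN : ∀ y, 0 < y → Φ y ≤ N := fun y hy => by
    have h := hN y hy
    rwa [← ofReal_integral_eq_lintegral_ofReal ((hLp y hy).integrable_norm_pow two_ne_zero)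
      (ae_of_all _ fun q => by positivity), ENNReal.ofReal_le_ofReal_iff hN0] at h
  have hpol : ∀ a b, 0 < a → 0 < b → ∀ r : ℝ,
      ∫ q, ‖graphSlice P F a q - r * graphSlice P F b q‖ ^ 2 =
        Φ b * (r * r) + (-2 * Φ ((a + b) / 2)) * r + Φ a := fun a b ha hb =>
    integral_norm_sub_graphSlice hP hFm hF hN ha hb
  have hquad : ∀ a b, 0 < a → 0 < b → ∀ r : ℝ,
      0 ≤ Φ b * (r * r) + (-2 * Φ ((a + b) / 2)) * r + Φ a := fun a b ha hb r => by
    rw [← hpol a b ha hb r]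
    exact integral_nonneg fun q => by positivity
  clear_value Φ
  have hlog : ∀ a b, 0 < a → 0 < b → Φ ((a + b) / 2) ^ 2 ≤ Φ a * Φ b := fun a b ha hb => by
    have h := discrim_le_zero (hquad a b ha hb)
    rw [discrim] at h
    linarith
  have hconv : ∀ a b, 0 < a → 0 < b → 2 * Φ ((a + b) / 2) ≤ Φ a + Φ b := fun a b ha hb => by
    linarith [hquad a b ha hb 1]
  have hanti := antitoneOn_of_midpoint_convex hΦN hconv
  have hinner : ∀ y ∈ Ioi c, ∫⁻ q, ENNReal.ofReal
        (‖graphSlice P F y q - (1 : ℝ) * graphSlice P F (y + 2 * k) q‖ ^ 2 / (2 * k) ^ 2) =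
      ENNReal.ofReal (((2 * k) ^ 2)⁻¹) *
        ENNReal.ofReal (Φ y + Φ (y + 2 * k) - 2 * Φ (y + k)) := by
    intro y hy
    have hy0 : 0 < y := hc.trans hy
    have hy1 : 0 < y + 2 * k := by linarith
    have hi : Integrable fun q =>
        ‖graphSlice P F y q - (1 : ℝ) * graphSlice P F (y + 2 * k) q‖ ^ 2 :=
      ((hLp y hy0).sub ((hLp _ hy1).const_mul _)).integrable_norm_pow two_ne_zero
    have h := hpol y (y + 2 * k) hy0 hy1 1
    rw [show (y + (y + 2 * k)) / 2 = y + k by ring] at h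
    rw [show Φ y + Φ (y + 2 * k) - 2 * Φ (y + k) =
      Φ (y + 2 * k) * (1 * 1) + (-2 * Φ (y + k)) * 1 + Φ y by ring, ← h,
      ← ENNReal.ofReal_mul (by positivity), ← integral_const_mul,
      ofReal_integral_eq_lintegral_ofReal (hi.const_mul _) (ae_of_all _ fun q => by positivity)]
    simp_rw [div_eq_inv_mul]
  rw [setLIntegral_congr_fun measurableSet_Ioi hinner,
    lintegral_const_mul' _ _ ENNReal.ofReal_ne_top]
  have hB : ∀ y, c ≤ y → Φ y - Φ (y + k) ≤ N / (m * Real.exp 1) := fun y hy =>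
    sub_le_of_midpoint_logConvex hΦ0 hΦN hlog hm hk (hmk.trans_le hy)
  refine (mul_le_mul_right (lintegral_second_difference_le hc hk hanti hconv hB) _).trans ?_
  rw [← ENNReal.ofReal_mul (by positivity)]
  refine ENNReal.ofReal_le_ofReal (le_of_eq ?_)
  have : (m : ℝ) ≠ 0 := by exact_mod_cast hm.ne'
  field_simp
  ring

/-- The derivative estimate in graph coordinates, for globally measurable `F`. -/
lemma lintegral_fderiv_graph_le {P : ℂ → ℝ} {F : ℂ × ℂ → ℂ} (hP : Continuous P)
    (hFm : Measurable F) (hF : DifferentiableOn ℂ F {p : ℂ × ℂ | P p.1 < p.2.im}) {N : ℝ}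
    (hN0 : 0 ≤ N)
    (hN : ∀ y, 0 < y → ∫⁻ q, ENNReal.ofReal (‖graphSlice P F y q‖ ^ 2) ≤ ENNReal.ofReal N)
    {c : ℝ} (hc : 0 < c) :
    ∫⁻ y in Ioi c, ∫⁻ q : ℂ × ℝ, ENNReal.ofReal
        (‖fderiv ℂ F (q.1, (q.2 : ℂ) + (P q.1 + y : ℝ) * I) (0, 1)‖ ^ 2) ≤
      ENNReal.ofReal (c⁻¹ / (4 * Real.exp 1)) * ENNReal.ofReal N := by
  have hGm := measurable_graphSlice hP hFm
  set k : ℕ → ℝ := fun n => c / (n + 2) with hk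
  have hk0 : ∀ n, 0 < k n := fun n => by positivity
  have hmk : ∀ n : ℕ, ((n + 1 : ℕ) : ℝ) * k n = c - k n := fun n => by
    simp only [hk]
    push_cast
    field_simp
    ring
  have hklim : Tendsto k atTop (𝓝 0) :=
    (tendsto_atTop_add_const_right _ _ tendsto_natCast_atTop_atTop).const_div_atTop c
  clear_value k
  have hu : Tendsto (fun n => 2 * k n) atTop (𝓝 0) := by simpa using hklim.const_mul 2
  set f : ℕ → ℝ → ℂ × ℝ → ENNReal := fun n y q => ENNReal.ofReal
    (‖graphSlice P F y q - (1 : ℝ) * graphSlice P F (y + 2 * k n) q‖ ^ 2 / (2 * k n) ^ 2)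
  have hfm : ∀ n, Measurable fun x : ℝ × (ℂ × ℝ) => f n x.1 x.2 := fun n => by
    have h : Measurable fun x : ℝ × (ℂ × ℝ) => graphSlice P F (x.1 + 2 * k n) x.2 :=
      hGm.comp ((measurable_fst.add_const _).prodMk measurable_snd)
    exact (((hGm.sub (h.const_mul _)).norm.pow_const 2).div_const _).ennreal_ofReal
  have hstep : ∀ n, ∫⁻ y in Ioi c, ∫⁻ q, f n y q ≤
      ENNReal.ofReal (N / (4 * Real.exp 1 * (c - k n))) := fun n => by
    rw [← hmk n]
    exact lintegral_graphSlice_sub_le hP hFm hF hN0 hN hc (hk0 n) n.succ_pos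
      (by rw [hmk n]; linarith [hk0 n])
  have hlim : Tendsto (fun n => ENNReal.ofReal (N / (4 * Real.exp 1 * (c - k n)))) atTop
      (𝓝 (ENNReal.ofReal (N / (4 * Real.exp 1 * c)))) := by
    have h : Tendsto (fun n => c - k n) atTop (𝓝 c) := by simpa using hklim.const_sub c
    have h' : Tendsto (fun n => N / (4 * Real.exp 1 * (c - k n))) atTop
        (𝓝 (N / (4 * Real.exp 1 * c))) :=
      tendsto_const_nhds.div (h.const_mul _) (by positivity)
    exact ENNReal.tendsto_ofReal h'
  have hconst : ENNReal.ofReal (c⁻¹ / (4 * Real.exp 1)) * ENNReal.ofReal N =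
      ENNReal.ofReal (N / (4 * Real.exp 1 * c)) := by
    rw [← ENNReal.ofReal_mul (by positivity)]
    congr 1
    field_simp
  rw [hconst]
  have hf_lim : ∀ y ∈ Ioi c, ∀ q, liminf (fun n => f n y q) atTop = ENNReal.ofReal
      (‖fderiv ℂ F (q.1, (q.2 : ℂ) + (P q.1 + y : ℝ) * I) (0, 1)‖ ^ 2) := fun y hy q => by
    have hu0 : ∀ n, 0 < 2 * k n := fun n => mul_pos two_pos (hk0 n)
    have h := tendsto_graphSlice_slope hP hF (hc.trans hy) q hu hu0
    exact h.liminf_eq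
  clear_value f
  have hfy : ∀ y n, Measurable (f n y) := fun y n => (hfm n).comp measurable_prodMk_left
  have hfatou : ∀ y ∈ Ioi c, ∫⁻ q : ℂ × ℝ, ENNReal.ofReal
        (‖fderiv ℂ F (q.1, (q.2 : ℂ) + (P q.1 + y : ℝ) * I) (0, 1)‖ ^ 2) ≤
      liminf (fun n => ∫⁻ q, f n y q) atTop := fun y hy => by
    simp_rw [← hf_lim y hy]
    exact lintegral_liminf_le (hfy y)
  refine (setLIntegral_mono' measurableSet_Ioi hfatou).trans ?_
  refine (lintegral_liminf_le fun n => (hfm n).lintegral_prod_right').trans ?_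
  exact (liminf_le_liminf (Eventually.of_forall hstep)).trans hlim.liminf_eq.le

/-- Proposition B.3(ii): let `P : ℂ → ℝ` be smooth, subharmonic and non-harmonic,
`Ω = {(z,z₂) : Im z₂ > P(z)}`, and let `F` be holomorphic on `Ω` with finite Hardy norm
`‖F‖²_{H²(Ω)} = sup_{ε>0} ∫_{ℂ×ℝ} |F(z, t+i(P(z)+ε))|² dm(z,t)`. Then for every
`ε₀ > 0`,
`∫_Ω |(∂F/∂z₂)(z, z₂+iε₀)|² dm ≤ (1/(4e)) ε₀⁻¹ ‖F‖²_{H²(Ω)}`. -/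
theorem statement19 (P : ℂ → ℝ) (hP : ContDiff ℝ (⊤ : ℕ∞) P)
    (hsub : ∀ z : ℂ, 0 ≤ laplacian P z)
    (hnonharm : ∃ z : ℂ, laplacian P z ≠ 0)
    (F : ℂ × ℂ → ℂ)
    (hF : DifferentiableOn ℂ F {p : ℂ × ℂ | P p.1 < p.2.im})
    (hH2 : (⨆ ε ∈ Set.Ioi (0 : ℝ), ∫⁻ q : ℂ × ℝ,
      ENNReal.ofReal (‖F (q.1, (q.2 : ℂ) + (P q.1 + ε : ℝ) * Complex.I)‖ ^ 2)) < ⊤)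
    (ε₀ : ℝ) (hε₀ : 0 < ε₀) :
    (∫⁻ p in {p : ℂ × ℂ | P p.1 < p.2.im},
        ENNReal.ofReal (‖fderiv ℂ F (p.1, p.2 + (ε₀ : ℂ) * Complex.I) (0, 1)‖ ^ 2)) ≤
      ENNReal.ofReal (ε₀⁻¹ / (4 * Real.exp 1)) *
        ⨆ ε ∈ Set.Ioi (0 : ℝ), ∫⁻ q : ℂ × ℝ,
          ENNReal.ofReal (‖F (q.1, (q.2 : ℂ) + (P q.1 + ε : ℝ) * Complex.I)‖ ^ 2) := by
  set S := ⨆ ε ∈ Set.Ioi (0 : ℝ), ∫⁻ q : ℂ × ℝ,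
    ENNReal.ofReal (‖F (q.1, (q.2 : ℂ) + (P q.1 + ε : ℝ) * Complex.I)‖ ^ 2)
  have hPc : Continuous P := hP.continuous
  set Ω : Set (ℂ × ℂ) := {p | P p.1 < p.2.im} with hΩdef
  have hΩ : IsOpen Ω := isOpen_lt (by fun_prop) (by fun_prop)
  set F₁ : ℂ × ℂ → ℂ := Ω.indicator F with hF₁
  have heq : EqOn F₁ F Ω := fun p hp => indicator_of_mem hp F
  have hF₁m : Measurable F₁ := by
    classical
    rw [hF₁, ← piecewise_eq_indicator]
    exact hF.continuousOn.measurable_piecewise continuousOn_const hΩ.measurableSet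
  have hF₁d : DifferentiableOn ℂ F₁ Ω := hF.congr heq
  have hN : ∀ y, 0 < y →
      ∫⁻ q, ENNReal.ofReal (‖graphSlice P F₁ y q‖ ^ 2) ≤ ENNReal.ofReal S.toReal := by
    intro y hy
    rw [ENNReal.ofReal_toReal hH2.ne]
    refine le_trans (le_of_eq (lintegral_congr fun q => ?_)) (le_iSup₂ (f := fun ε _ =>
      ∫⁻ q : ℂ × ℝ, ENNReal.ofReal (‖F (q.1, (q.2 : ℂ) + (P q.1 + ε : ℝ) * I)‖ ^ 2))
      y (mem_Ioi.2 hy))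
    rw [graphSlice, heq (by simp [hΩdef, hy])]
  have hmain := lintegral_fderiv_graph_le hPc hF₁m hF₁d ENNReal.toReal_nonneg hN hε₀
  rw [ENNReal.ofReal_toReal hH2.ne] at hmain
  rw [← setLIntegral_epigraph_eq hPc
    (g := fun x => ENNReal.ofReal (‖fderiv ℂ F₁ x (0, 1)‖ ^ 2))
    ((measurable_fderiv_apply_const ℂ F₁ (0, 1)).norm.pow_const 2).ennreal_ofReal] at hmain
  refine le_trans (le_of_eq (setLIntegral_congr_fun hΩ.measurableSet fun p hp => ?_)) hmain
  have hp' : (p.1, p.2 + (ε₀ : ℂ) * I) ∈ Ω := by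
    have : P p.1 < p.2.im := hp
    simp [hΩdef]; linarith
  simp only [(heq.eventuallyEq_of_mem (hΩ.mem_nhds hp')).fderiv_eq]
end
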